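/- arXiv:0811.3530 — 4 statements merged into one kernel-verified Lean document; each statement's English description precedes it below -/
import Mathlib

section
/- Let A ∈ ℝ^{n×n}, C ∈ ℝ^{m×n}, and let P ∈ ℝ^{n×n} be symmetric positive definite and satisfy the algebraic Riccati equation AP + PAᵀ + I_n − PCᵀCP = 0. Then for every real σ ≥ 1 and every ω ∈ ℝ, the complex matrix A − (σ + iω)PCᵀC is Hurwitz, i.e. every eigenvalue of A − (σ + iω)PCᵀC has strictly negative real part. -/
open Matrix

open scoped MatrixOrder in
theorem riccati_aux_factor {n : ℕ} (P : Matrix (Fin n) (Fin n) ℝ) (h : P.PosSemidef) :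
    ∃ B : Matrix (Fin n) (Fin n) ℝ, P = Bᴴ * B :=
  CStarAlgebra.nonneg_iff_eq_star_mul_self.mp h.nonneg

open scoped ComplexOrder in
/-- If `P` is a symmetric positive-definite solution of the algebraic Riccati equation
`AP + PAᵀ + I - PCᵀCP = 0`, then for every real `σ ≥ 1` and `ω ∈ ℝ` the complex matrix
`A - (σ + iω)PCᵀC` is Hurwitz. -/
theorem riccati_complex_shift_hurwitz
    (n m : ℕ) (A : Matrix (Fin n) (Fin n) ℝ) (C : Matrix (Fin m) (Fin n) ℝ)
    (P : Matrix (Fin n) (Fin n) ℝ) (hPsymm : Pᵀ = P) (hPpos : P.PosDef)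
    (hRiccati : A * P + P * Aᵀ + 1 - P * Cᵀ * C * P = 0) :
    ∀ σ : ℝ, 1 ≤ σ → ∀ ω : ℝ,
      ∀ μ ∈ spectrum ℂ (A.map Complex.ofReal
          - ((σ : ℂ) + (ω : ℂ) * Complex.I) • ((P * Cᵀ * C).map Complex.ofReal)),
        μ.re < 0 := by
  intro σ hσ ω μ hμ
  obtain ⟨B, hB⟩ := riccati_aux_factor P hPpos.posSemidef
  set f : ℝ →+* ℂ := Complex.ofRealHom with hf
  have hstar : ∀ {k l : ℕ} (X : Matrix (Fin k) (Fin l) ℝ), (X.map f)ᴴ = (Xᵀ).map f := by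
    intro k l X
    ext i j
    simp [hf]
  set Ac := A.map f with hAc
  set Bc := B.map f with hBc
  set Cc := C.map f with hCc
  set Pc := P.map f with hPc
  have hPB : Pc = Bcᴴ * Bc := by
    rw [hBc, hstar, ← Matrix.map_mul, hPc, hB]
    simp
  have hPH : Pcᴴ = Pc := by rw [hPc, hstar, hPsymm]
  have hK : (P * Cᵀ * C).map f = Pc * Ccᴴ * Cc := by
    rw [hCc, hstar, Matrix.map_mul, Matrix.map_mul]
  have hR : Ac * Pc + Pc * Acᴴ + 1 - Pc * Ccᴴ * Cc * Pc = 0 := by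
    have h := congrArg (fun X => f.mapMatrix X) hRiccati
    simp only [map_sub, map_add, map_one, map_zero, map_mul, RingHom.mapMatrix_apply,
      Matrix.map_mul] at h
    rw [hAc, hstar, hCc, hstar]
    simpa only [Matrix.mul_assoc] using h
  set s : ℂ := (σ : ℂ) + (ω : ℂ) * Complex.I with hs
  set M := Ac - s • (Pc * Ccᴴ * Cc) with hM
  have hμ' : μ ∈ spectrum ℂ M := by rw [hM, ← hK]; exact hμ
  have hdet : (algebraMap ℂ (Matrix (Fin n) (Fin n) ℂ) μ - M).det = 0 := by
    rw [spectrum.mem_iff, Matrix.isUnit_iff_isUnit_det, isUnit_iff_ne_zero, not_not] at hμ'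
    exact hμ'
  obtain ⟨v, hv0, hv⟩ := Matrix.exists_vecMul_eq_zero_iff.2 hdet
  have hvM : v ᵥ* M = μ • v := by
    rw [Matrix.vecMul_sub, sub_eq_zero, Algebra.algebraMap_eq_smul_one, Matrix.vecMul_smul,
      Matrix.vecMul_one] at hv
    exact hv.symm
  have hMw : Mᴴ *ᵥ star v = star μ • star v := by
    rw [← Matrix.star_vecMul, hvM, star_smul]
  have hss : s + star s = 2 * (σ : ℂ) := by
    rw [hs]
    apply Complex.ext <;> simp <;> ring
  have hL : M * Pc + Pc * Mᴴ = -1 - (2 * (σ : ℂ) - 1) • (Pc * Ccᴴ * Cc * Pc) := by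
    have hMH : Mᴴ = Acᴴ - star s • (Ccᴴ * Cc * Pc) := by
      rw [hM]
      simp [Matrix.conjTranspose_mul, hPH, Matrix.mul_assoc]
    have e : Ac * Pc + Pc * Acᴴ = Pc * Ccᴴ * Cc * Pc - 1 := by
      rw [← sub_eq_zero, ← hR]; abel
    have e2 : M * Pc + Pc * Mᴴ
        = (Ac * Pc + Pc * Acᴴ) - (s + star s) • (Pc * Ccᴴ * Cc * Pc) := by
      rw [hMH, hM, Matrix.sub_mul, Matrix.mul_sub, Matrix.smul_mul, Matrix.mul_smul, add_smul s (star s)]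
      simp only [Matrix.mul_assoc]
      abel
    rw [e2, e, hss, sub_smul, one_smul]
    abel
  have h1 : v ⬝ᵥ ((M * Pc + Pc * Mᴴ) *ᵥ star v) = (μ + star μ) * (v ⬝ᵥ (Pc *ᵥ star v)) := by
    rw [Matrix.add_mulVec, dotProduct_add, ← Matrix.mulVec_mulVec, ← Matrix.mulVec_mulVec, hMw,
      Matrix.dotProduct_mulVec v M, hvM, Matrix.mulVec_smul, dotProduct_smul, smul_dotProduct,
      smul_eq_mul, smul_eq_mul, add_mul]
  have key : ∀ {k : ℕ} (X : Matrix (Fin k) (Fin n) ℂ),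
      v ⬝ᵥ ((Xᴴ * X) *ᵥ star v) = star (X *ᵥ star v) ⬝ᵥ (X *ᵥ star v) := by
    intro k X
    rw [← Matrix.mulVec_mulVec, Matrix.dotProduct_mulVec, Matrix.star_mulVec, star_star]
  have hp : 0 ≤ v ⬝ᵥ (Pc *ᵥ star v) := by
    rw [hPB, key]
    exact dotProduct_star_self_nonneg _
  have hq : 0 ≤ v ⬝ᵥ ((Pc * Ccᴴ * Cc * Pc) *ᵥ star v) := by
    have : Pc * Ccᴴ * Cc * Pc = (Cc * Pc)ᴴ * (Cc * Pc) := by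
      rw [Matrix.conjTranspose_mul, hPH]
      simp only [Matrix.mul_assoc]
    rw [this, key]
    exact dotProduct_star_self_nonneg _
  have hr : 0 < v ⬝ᵥ star v := Matrix.dotProduct_self_star_pos_iff.2 hv0
  rw [hL, Matrix.sub_mulVec, Matrix.neg_mulVec, Matrix.one_mulVec, Matrix.smul_mulVec,
    dotProduct_sub, dotProduct_neg, dotProduct_smul, smul_eq_mul] at h1
  generalize v ⬝ᵥ (Pc *ᵥ star v) = p at *
  generalize v ⬝ᵥ ((Pc * Ccᴴ * Cc * Pc) *ᵥ star v) = q at *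
  generalize v ⬝ᵥ star v = r at *
  rw [Complex.le_def] at hp hq
  rw [Complex.lt_def] at hr
  have h2 := congrArg Complex.re h1
  simp at h2 hp hq hr
  by_contra hneg
  push Not at hneg
  nlinarith [mul_nonneg hneg hp.1, mul_nonneg (by linarith : (0:ℝ) ≤ 2 * σ - 1) hq.1]
end

section
/- Let A ∈ ℝ^{n×n}, C ∈ ℝ^{m×n}, and let P ∈ ℝ^{n×n} be symmetric positive definite and satisfy the algebraic Riccati equation AP + PAᵀ + I_n − PCᵀCP = 0. Then the matrix A − PCᵀC is Hurwitz, i.e. every eigenvalue of A − PCᵀC (over ℂ) has strictly negative real part. -/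
open Matrix

theorem ric_key
    (n m : ℕ) (A : Matrix (Fin n) (Fin n) ℝ) (C : Matrix (Fin m) (Fin n) ℝ)
    (P : Matrix (Fin n) (Fin n) ℝ) (hPsymm : Pᵀ = P)
    (hRiccati : A * P + P * Aᵀ + 1 - P * Cᵀ * C * P = 0) (w : Fin n → ℝ) :
    2 * ((w ᵥ* (A - P * Cᵀ * C)) ⬝ᵥ (P *ᵥ w)) ≤ -(w ⬝ᵥ w) := by
  have h1 : (w ᵥ* (A - P * Cᵀ * C)) ⬝ᵥ (P *ᵥ w)
      = w ⬝ᵥ (((A - P * Cᵀ * C) * P) *ᵥ w) := by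
    rw [← Matrix.mulVec_mulVec, ← Matrix.dotProduct_mulVec]
  have h2 : w ⬝ᵥ (((A - P * Cᵀ * C) * P) *ᵥ w)
      = w ⬝ᵥ (((A - P * Cᵀ * C) * P)ᵀ *ᵥ w) := by
    rw [Matrix.mulVec_transpose, dotProduct_comm w (w ᵥ* _), ← Matrix.dotProduct_mulVec]
  have h3 : (A - P * Cᵀ * C) * P + ((A - P * Cᵀ * C) * P)ᵀ
      = -1 - (C * P)ᵀ * (C * P) := by
    have e : A * P + P * Aᵀ = P * Cᵀ * C * P - 1 := by
      rw [← sub_eq_zero, ← hRiccati]; abel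
    simp only [Matrix.transpose_mul, Matrix.transpose_sub, Matrix.sub_mul, Matrix.mul_sub,
      hPsymm, Matrix.transpose_transpose, ← Matrix.mul_assoc]
    rw [sub_add_sub_comm, e]; abel
  have h4 : w ⬝ᵥ (((C * P)ᵀ * (C * P)) *ᵥ w) = ((C * P) *ᵥ w) ⬝ᵥ ((C * P) *ᵥ w) := by
    rw [← Matrix.mulVec_mulVec, Matrix.dotProduct_mulVec, Matrix.vecMul_transpose]
  have h5 : 0 ≤ ((C * P) *ᵥ w) ⬝ᵥ ((C * P) *ᵥ w) :=
    Finset.sum_nonneg fun i _ => mul_self_nonneg _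
  have h6 : 2 * ((w ᵥ* (A - P * Cᵀ * C)) ⬝ᵥ (P *ᵥ w))
      = w ⬝ᵥ ((-1 - (C * P)ᵀ * (C * P)) *ᵥ w) := by
    rw [← h3, Matrix.add_mulVec, dotProduct_add, ← h2, h1]; ring
  rw [h6, Matrix.sub_mulVec, dotProduct_sub, h4, Matrix.neg_mulVec, Matrix.one_mulVec,
    dotProduct_neg]
  linarith

/-- If `P` is a symmetric positive-definite solution of the algebraic Riccati equation
`AP + PAᵀ + I - PCᵀCP = 0`, then `A - PCᵀC` is Hurwitz: every eigenvalue over `ℂ`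
has strictly negative real part. -/
theorem riccati_closed_loop_hurwitz
    (n m : ℕ) (A : Matrix (Fin n) (Fin n) ℝ) (C : Matrix (Fin m) (Fin n) ℝ)
    (P : Matrix (Fin n) (Fin n) ℝ) (hPsymm : Pᵀ = P) (hPpos : P.PosDef)
    (hRiccati : A * P + P * Aᵀ + 1 - P * Cᵀ * C * P = 0) :
    ∀ μ ∈ spectrum ℂ ((A - P * Cᵀ * C).map Complex.ofReal), μ.re < 0 := by
  intro μ hμ
  have key := ric_key n m A C P hPsymm hRiccati
  generalize A - P * Cᵀ * C = F at hμ key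
  rw [spectrum.mem_iff, Matrix.isUnit_iff_isUnit_det, isUnit_iff_ne_zero, not_not,
    ← Matrix.exists_vecMul_eq_zero_iff] at hμ
  obtain ⟨v, hv0, hv⟩ := hμ
  rw [Matrix.vecMul_sub, sub_eq_zero, Algebra.algebraMap_eq_smul_one, Matrix.vecMul_smul,
    Matrix.vecMul_one] at hv
  set x : Fin n → ℝ := fun i => (v i).re with hx
  set y : Fin n → ℝ := fun i => (v i).im with hy
  have ex : x ᵥ* F = μ.re • x - μ.im • y := by
    ext i
    have := congrArg Complex.re (congrFun hv i)
    simp [Matrix.vecMul, dotProduct, Complex.re_sum] at this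
    simp [Matrix.vecMul, dotProduct, hx, hy, this]
  have ey : y ᵥ* F = μ.im • x + μ.re • y := by
    ext i
    have := congrArg Complex.im (congrFun hv i)
    simp [Matrix.vecMul, dotProduct, Complex.im_sum] at this
    simp [Matrix.vecMul, dotProduct, hx, hy, ← this]
    ring
  have kx := key x
  have ky := key y
  have hsym : y ⬝ᵥ (P *ᵥ x) = x ⬝ᵥ (P *ᵥ y) := by
    rw [Matrix.dotProduct_mulVec, dotProduct_comm, ← Matrix.mulVec_transpose, hPsymm]
  rw [ex, sub_dotProduct, smul_dotProduct, smul_dotProduct, hsym] at kx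
  rw [ey, add_dotProduct, smul_dotProduct, smul_dotProduct] at ky
  simp only [smul_eq_mul] at kx ky
  have px : 0 ≤ x ⬝ᵥ (P *ᵥ x) := by simpa using hPpos.posSemidef.dotProduct_mulVec_nonneg x
  have py : 0 ≤ y ⬝ᵥ (P *ᵥ y) := by simpa using hPpos.posSemidef.dotProduct_mulVec_nonneg y
  have nx : 0 ≤ x ⬝ᵥ x := Finset.sum_nonneg fun i _ => mul_self_nonneg _
  have ny : 0 ≤ y ⬝ᵥ y := Finset.sum_nonneg fun i _ => mul_self_nonneg _
  have hpos : 0 < x ⬝ᵥ x + y ⬝ᵥ y := by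
    by_contra hcon
    have zx : x ⬝ᵥ x = 0 := by linarith
    have zy : y ⬝ᵥ y = 0 := by linarith
    rw [dotProduct_self_eq_zero] at zx zy
    exact hv0 (funext fun i => Complex.ext (congrFun zx i) (congrFun zy i))
  by_contra hcon
  push Not at hcon
  nlinarith [mul_nonneg hcon px, mul_nonneg hcon py]
end

section
/- Let Γ ∈ ℝ^{p×p} be a connected interconnection. Then 0 is an algebraically simple eigenvalue of Γ (a root of multiplicity one of its characteristic polynomial), and every other eigenvalue λ of Γ over ℂ satisfies Re(λ) < 0. -/
open Matrix Filter Topology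
open scoped Kronecker

/-- `Γ` is an interconnection: off-diagonal entries are nonnegative and each diagonal
entry is minus the sum of the other entries in its row (equivalently, rows sum to zero). -/
def IsInterconnection {p : ℕ} (Γ : Matrix (Fin p) (Fin p) ℝ) : Prop :=
  (∀ i j, i ≠ j → 0 ≤ Γ i j) ∧ ∀ i, ∑ j, Γ i j = 0

/-- `Γ` is a connected interconnection: it is an interconnection and its graph
(with an edge `(i, j)` whenever `Γ i j > 0`) has a node reachable by a directed
path from every other node. -/
def IsConnectedInterconnection {p : ℕ} (Γ : Matrix (Fin p) (Fin p) ℝ) : Prop :=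
  IsInterconnection Γ ∧
    ∃ k : Fin p, ∀ i : Fin p, Relation.ReflTransGen (fun a b => 0 < Γ a b) i k

theorem aux_max {p : ℕ} {Γ : Matrix (Fin p) (Fin p) ℝ} (h : IsInterconnection Γ)
    (x : Fin p → ℝ) (i : Fin p) (hi : ∀ j, x j ≤ x i) :
    (Γ *ᵥ x) i ≤ 0 ∧ ((Γ *ᵥ x) i = 0 → ∀ j, 0 < Γ i j → x j = x i) := by
  have e : (Γ *ᵥ x) i = ∑ j, Γ i j * (x j - x i) := by
    simp only [mul_sub, Finset.sum_sub_distrib, ← Finset.sum_mul, h.2 i]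
    simp [Matrix.mulVec, dotProduct]
  have t : ∀ j ∈ Finset.univ, Γ i j * (x j - x i) ≤ 0 := by
    intro j _
    by_cases hj : i = j
    · subst hj; simp
    · exact mul_nonpos_of_nonneg_of_nonpos (h.1 i j hj) (sub_nonpos.2 (hi j))
  rw [e]
  refine ⟨Finset.sum_nonpos t, fun h0 j hj => ?_⟩
  have := (Finset.sum_eq_zero_iff_of_nonpos t).1 h0 j (Finset.mem_univ j)
  rcases mul_eq_zero.1 this with h1 | h1
  · exact absurd h1 hj.ne'
  · linarith

theorem aux_le {p : ℕ} {Γ : Matrix (Fin p) (Fin p) ℝ} (h : IsInterconnection Γ)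
    (k : Fin p) (hk : ∀ i : Fin p, Relation.ReflTransGen (fun a b => 0 < Γ a b) i k)
    (x : Fin p → ℝ) (c : ℝ) (hx : ∀ i, (Γ *ᵥ x) i = c) :
    c ≤ 0 ∧ (c = 0 → ∀ j, x j ≤ x k) := by
  have : Nonempty (Fin p) := ⟨k⟩
  obtain ⟨m, hm⟩ := Finite.exists_max x
  refine ⟨hx m ▸ (aux_max h x m hm).1, fun hc => ?_⟩
  have : x k = x m := by
    have := hk m
    clear hk
    induction this with
    | refl => rfl
    | tail _ hbc ih =>
      rename_i b d _
      rw [← ih]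
      exact (aux_max h x b (fun j => ih ▸ hm j)).2 ((hx b).trans hc) _ hbc
  intro j
  rw [this]
  exact hm j

theorem aux_const {p : ℕ} {Γ : Matrix (Fin p) (Fin p) ℝ} (h : IsInterconnection Γ)
    (k : Fin p) (hk : ∀ i : Fin p, Relation.ReflTransGen (fun a b => 0 < Γ a b) i k)
    (x : Fin p → ℝ) (c : ℝ) (hx : ∀ i, (Γ *ᵥ x) i = c) :
    c = 0 ∧ ∀ j, x j = x k := by
  have h1 := aux_le h k hk x c hx
  have h2 := aux_le h k hk (-x) (-c) (fun i => by rw [Matrix.mulVec_neg, Pi.neg_apply, hx])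
  have hc : c = 0 := by linarith [h1.1, h2.1]
  refine ⟨hc, fun j => le_antisymm (h1.2 hc j) ?_⟩
  have := h2.2 (by simp [hc]) j
  simpa using this

theorem aux_pow {p : ℕ} {Γ : Matrix (Fin p) (Fin p) ℝ} (h : IsInterconnection Γ)
    (k : Fin p) (hk : ∀ i : Fin p, Relation.ReflTransGen (fun a b => 0 < Γ a b) i k)
    (n : ℕ) (x : Fin p → ℝ) (hx : (Matrix.toLin' Γ ^ n) x = 0) :
    ∀ j, x j = x k := by
  induction n generalizing x with
  | zero => simp at hx; simp [hx]
  | succ n ih =>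
    rw [pow_succ, Module.End.mul_apply] at hx
    have := ih _ hx
    exact (aux_const h k hk x ((Γ *ᵥ x) k) (by simpa using this)).2

theorem aux_space {p : ℕ} {Γ : Matrix (Fin p) (Fin p) ℝ} (h : IsInterconnection Γ)
    (k : Fin p) (hk : ∀ i : Fin p, Relation.ReflTransGen (fun a b => 0 < Γ a b) i k) :
    Module.End.maxGenEigenspace (Matrix.toLin' Γ) 0 = Submodule.span ℝ {(fun _ => 1 : Fin p → ℝ)} := by
  ext x
  rw [Module.End.mem_maxGenEigenspace, Submodule.mem_span_singleton]
  simp only [zero_smul, sub_zero]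
  constructor
  · rintro ⟨n, hn⟩
    refine ⟨x k, ?_⟩
    ext j
    simp [aux_pow h k hk n x hn j]
  · rintro ⟨a, rfl⟩
    refine ⟨1, ?_⟩
    ext i
    simp [Matrix.mulVec, dotProduct, ← Finset.sum_mul, h.2 i]

/-- For a connected interconnection `Γ`, zero is an algebraically simple eigenvalue
(a root of multiplicity one of the characteristic polynomial over `ℂ`), and every other
eigenvalue has strictly negative real part. -/
theorem connected_interconnection_spectrum
    (p : ℕ) (Γ : Matrix (Fin p) (Fin p) ℝ) (hΓ : IsConnectedInterconnection Γ) :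
    (Γ.map Complex.ofReal).charpoly.rootMultiplicity 0 = 1 ∧
    ∀ μ ∈ spectrum ℂ (Γ.map Complex.ofReal), μ ≠ 0 → μ.re < 0 := by
  obtain ⟨h, k, hk⟩ := hΓ
  constructor
  · have e : (Γ.map Complex.ofReal).charpoly = Γ.charpoly.map Complex.ofRealHom :=
      Matrix.charpoly_map Γ Complex.ofRealHom
    have e2 := Polynomial.eq_rootMultiplicity_map (p := Γ.charpoly)
      (f := Complex.ofRealHom) Complex.ofReal_injective 0
    rw [map_zero] at e2
    rw [e, ← e2, ← Matrix.charpoly_toLin', ← LinearMap.finrank_maxGenEigenspace_eq,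
      aux_space h k hk]
    apply finrank_span_singleton
    intro h0
    simpa using congrFun h0 k
  · intro μ hμ h0
    rw [← Matrix.spectrum_toLin', ← Module.End.hasEigenvalue_iff_mem_spectrum] at hμ
    obtain ⟨i, hi⟩ := eigenvalue_mem_ball hμ
    have hs : ∑ j ∈ Finset.univ.erase i, ‖(Γ.map Complex.ofReal) i j‖ = - Γ i i := by
      have := h.2 i
      rw [← Finset.add_sum_erase _ _ (Finset.mem_univ i)] at this
      rw [← eq_neg_iff_add_eq_zero.2 ((add_comm _ _).trans this)]
      refine Finset.sum_congr rfl fun j hj => ?_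
      simp [abs_of_nonneg (h.1 i j (Finset.ne_of_mem_erase hj).symm)]
    rw [hs, mem_closedBall_iff_norm, Matrix.map_apply] at hi
    have hd : 0 ≤ - Γ i i := (norm_nonneg _).trans hi
    have h2 := pow_le_pow_left₀ (norm_nonneg _) hi 2
    rw [← Complex.normSq_eq_norm_sq, Complex.normSq_apply] at h2
    simp only [Complex.sub_re, Complex.sub_im, Complex.ofReal_re, Complex.ofReal_im] at h2
    by_contra hc
    push Not at hc
    have h3 := mul_nonneg hd hc
    apply h0
    apply Complex.ext
    · simp only [Complex.zero_re]
      nlinarith [sq_nonneg μ.im, sq_nonneg μ.re]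
    · simp only [Complex.zero_im]
      nlinarith [sq_nonneg μ.im, sq_nonneg μ.re]
end

section
/- Let Γ ∈ ℝ^{p×p} satisfy Γ1 = 0 and let r ∈ ℝ^p satisfy rᵀΓ = 0 and rᵀ1 = 1. Suppose P, Q ∈ ℝ^{p×p} satisfy the Lyapunov equation (Γ − 1rᵀ)ᵀP + P(Γ − 1rᵀ) = −Q. Define P̂ := (I_p − 1rᵀ)ᵀ P (I_p − 1rᵀ) and Q̂ := (I_p − 1rᵀ)ᵀ Q (I_p − 1rᵀ). Then ΓᵀP̂ + P̂Γ = −Q̂. -/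
open Matrix

/-- If `Γ1 = 0`, `rᵀΓ = 0`, `rᵀ1 = 1` and `(Γ - 1rᵀ)ᵀP + P(Γ - 1rᵀ) = -Q`, then the
projected matrices `P̂ = (I - 1rᵀ)ᵀ P (I - 1rᵀ)` and `Q̂ = (I - 1rᵀ)ᵀ Q (I - 1rᵀ)`
satisfy `ΓᵀP̂ + P̂Γ = -Q̂`. -/
theorem projected_lyapunov_equation
    (p : ℕ) (Γ : Matrix (Fin p) (Fin p) ℝ)
    (hΓ1 : Γ *ᵥ (fun _ => 1) = 0)
    (r : Fin p → ℝ) (hr : r ᵥ* Γ = 0) (hr1 : ∑ i, r i = 1)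
    (P Q : Matrix (Fin p) (Fin p) ℝ)
    (hLyap : (Γ - vecMulVec (fun _ => (1 : ℝ)) r)ᵀ * P
        + P * (Γ - vecMulVec (fun _ => (1 : ℝ)) r) = -Q) :
    Γᵀ * ((1 - vecMulVec (fun _ => (1 : ℝ)) r)ᵀ * P * (1 - vecMulVec (fun _ => (1 : ℝ)) r))
      + ((1 - vecMulVec (fun _ => (1 : ℝ)) r)ᵀ * P * (1 - vecMulVec (fun _ => (1 : ℝ)) r)) * Γ
      = -((1 - vecMulVec (fun _ => (1 : ℝ)) r)ᵀ * Q
            * (1 - vecMulVec (fun _ => (1 : ℝ)) r)) := by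
  have h1 : Γ * vecMulVec (fun _ : Fin p => (1 : ℝ)) r = 0 := by
    rw [mul_vecMulVec, hΓ1, zero_vecMulVec]
  have h2 : vecMulVec (fun _ : Fin p => (1 : ℝ)) r * Γ = 0 := by
    rw [vecMulVec_mul, hr, vecMulVec_zero]
  have h3 : vecMulVec (fun _ : Fin p => (1 : ℝ)) r * vecMulVec (fun _ : Fin p => (1 : ℝ)) r
      = vecMulVec (fun _ : Fin p => (1 : ℝ)) r := by
    ext i j
    simp [Matrix.mul_apply, vecMulVec_apply, ← Finset.sum_mul, hr1]
  generalize vecMulVec (fun _ : Fin p => (1 : ℝ)) r = J at *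
  have e1 : (1 - J) * Γ = Γ := by rw [sub_mul, h2, one_mul, sub_zero]
  have e2 : (Γ - J) * (1 - J) = Γ := by
    rw [mul_sub, mul_one, sub_mul, h1, h3]; abel
  have e1t : Γᵀ * (1 - J)ᵀ = Γᵀ := by rw [← transpose_mul, e1]
  have e2t : (1 - J)ᵀ * (Γ - J)ᵀ = Γᵀ := by rw [← transpose_mul, e2]
  generalize (1 - J)ᵀ = M at *
  generalize (1 - J) = N at *
  have key : -(M * Q * N) = M * (-Q) * N := by rw [mul_neg, neg_mul]
  rw [key, ← hLyap, mul_add, add_mul, ← mul_assoc M, e2t, mul_assoc M (P * _), mul_assoc P, e2,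
    ← mul_assoc Γᵀ, ← mul_assoc Γᵀ, e1t, mul_assoc (M * P), e1, mul_assoc M P]
end
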